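/- Boolean algebra theorem: for every valuation frame M, the valuation of formulas in unit chain expansion, with conjunction interpreted as min, disjunction as max, and complement given by recursiveReduce, satisfies all Boolean algebra laws; explicitly, for all formulas F, F₁, F₂, F₃ in unit chain expansion: associativity and commutativity of min and max of the values [M ⊨ Fᵢ], both distributivity laws, idempotence ([M ⊨ F ∧ F] = [M ⊨ F ∨ F] = [M ⊨ F]), absorption ([M ⊨ F₁ ∧ (F₁ ∨ F₂)] = [M ⊨ F₁ ∨ (F₁ ∧ F₂)] = [M ⊨ F₁]), annihilation/identity with ⊤ and ⊥ ([M ⊨ ⊤ ∧ F] = [M ⊨ F], [M ⊨ ⊤ ∨ F] = 1, [M ⊨ ⊥ ∧ F] = 0, [M ⊨ ⊥ ∨ F] = [M ⊨ F]), complementation ([M ⊨ F ∨ recursiveReduce(F)] = 1 and [M ⊨ F ∧ recursiveReduce(F)] = 0), and double negation ([M ⊨ recursiveReduce(recursiveReduce(F))] = [M ⊨ F]). -/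

import Mathlib

/-!
Every value is 0 or 1, and on {0, 1} the operations min and max satisfy the lattice laws of a
Boolean algebra. What has to be proved is that `recursiveReduce` computes the complement
`v ↦ 1 - v` on unit chain expansions (`Frame.valAux_recursiveReduce`), by induction on the
formula with an arbitrary prefix: ∧ and ∨ are De Morgan's laws, and a chain is handled by the
fact that distributing its head over ∧ and ∨ preserves the value (`Frame.valAux_distOb`).
Double negation follows because `recursiveReduce` stays within unit chain expansions
(`UCE.recursiveReduce`).
-/

namespace GradualLogic

/-- Elements of 𝒮 = 𝒜 ∪ {⊤, ⊥}. -/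
inductive GS (A : Type) : Type
  | lit : A → GS A
  | top : GS A
  | bot : GS A

/-- Complement on 𝒮, given the involutive complement `c` on literals. -/
def GS.compl {A : Type} (c : A → A) : GS A → GS A
  | .lit a => .lit (c a)
  | .top => .bot
  | .bot => .top

/-- Formulas of gradual classical logic: F ::= s | F ∧ F | F ∨ F | ¬F | F ⋗ F. -/
inductive GF (A : Type) : Type
  | base : GS A → GF A
  | conj : GF A → GF A → GF A
  | disj : GF A → GF A → GF A
  | neg  : GF A → GF A
  | obat : GF A → GF A → GF A

/-- One-step reduction (closure of the ¬- and ⋗-rules under subformula contexts). -/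
inductive Step {A : Type} (c : A → A) : GF A → GF A → Prop
  | neg1 (x : GS A) :
      Step c (GF.neg (GF.base x)) (GF.base (GS.compl c x))
  | neg2 (F₁ F₂ : GF A) :
      Step c (GF.neg (GF.conj F₁ F₂)) (GF.disj (GF.neg F₁) (GF.neg F₂))
  | neg3 (F₁ F₂ : GF A) :
      Step c (GF.neg (GF.disj F₁ F₂)) (GF.conj (GF.neg F₁) (GF.neg F₂))
  | neg4 (x : GS A) (F₂ : GF A) :
      Step c (GF.neg (GF.obat (GF.base x) F₂))
        (GF.disj (GF.base (GS.compl c x)) (GF.obat (GF.base x) (GF.neg F₂)))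
  | ob1 (F₁ F₂ F₃ : GF A) :
      Step c (GF.obat (GF.obat F₁ F₂) F₃)
        (GF.conj (GF.obat F₁ F₃)
          (GF.disj (GF.obat F₁ F₂) (GF.obat F₁ (GF.obat F₂ F₃))))
  | ob2 (F₁ F₂ F₃ : GF A) :
      Step c (GF.obat (GF.conj F₁ F₂) F₃) (GF.conj (GF.obat F₁ F₃) (GF.obat F₂ F₃))
  | ob3 (F₁ F₂ F₃ : GF A) :
      Step c (GF.obat (GF.disj F₁ F₂) F₃) (GF.disj (GF.obat F₁ F₃) (GF.obat F₂ F₃))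
  | ob4 (F₁ F₂ F₃ : GF A) :
      Step c (GF.obat F₁ (GF.conj F₂ F₃)) (GF.conj (GF.obat F₁ F₂) (GF.obat F₁ F₃))
  | ob5 (F₁ F₂ F₃ : GF A) :
      Step c (GF.obat F₁ (GF.disj F₂ F₃)) (GF.disj (GF.obat F₁ F₂) (GF.obat F₁ F₃))
  | conj_left {F F' : GF A} (G : GF A) :
      Step c F F' → Step c (GF.conj F G) (GF.conj F' G)
  | conj_right (F : GF A) {G G' : GF A} :
      Step c G G' → Step c (GF.conj F G) (GF.conj F G')
  | disj_left {F F' : GF A} (G : GF A) :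
      Step c F F' → Step c (GF.disj F G) (GF.disj F' G)
  | disj_right (F : GF A) {G G' : GF A} :
      Step c G G' → Step c (GF.disj F G) (GF.disj F G')
  | neg_congr {F F' : GF A} :
      Step c F F' → Step c (GF.neg F) (GF.neg F')
  | obat_left {F F' : GF A} (G : GF A) :
      Step c F F' → Step c (GF.obat F G) (GF.obat F' G)
  | obat_right (F : GF A) {G G' : GF A} :
      Step c G G' → Step c (GF.obat F G) (GF.obat F G')

/-- `Reduces c F G`: F ↦* G in finitely many (possibly zero) steps. -/
def Reduces {A : Type} (c : A → A) : GF A → GF A → Prop :=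
  Relation.ReflTransGen (Step c)

/-- Unit chains s₀ ⋗ s₁ ⋗ ⋯ ⋗ s_{k+1} (right-associated, all components in 𝒮). -/
inductive IsUnitChain {A : Type} : GF A → Prop
  | base (x y : GS A) : IsUnitChain (GF.obat (GF.base x) (GF.base y))
  | cons (x : GS A) {F : GF A} : IsUnitChain F → IsUnitChain (GF.obat (GF.base x) F)

/-- Unit chain expansion: built from elements of 𝒮 and unit chains using only ∧ and ∨. -/
inductive UCE {A : Type} : GF A → Prop
  | base (x : GS A) : UCE (GF.base x)
  | chain {F : GF A} : IsUnitChain F → UCE F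
  | conj {F G : GF A} : UCE F → UCE G → UCE (GF.conj F G)
  | disj {F G : GF A} : UCE F → UCE G → UCE (GF.disj F G)

/-- Formulas in which ¬ does not occur. -/
inductive NegFree {A : Type} : GF A → Prop
  | base (x : GS A) : NegFree (GF.base x)
  | conj {F G : GF A} : NegFree F → NegFree G → NegFree (GF.conj F G)
  | disj {F G : GF A} : NegFree F → NegFree G → NegFree (GF.disj F G)
  | obat {F G : GF A} : NegFree F → NegFree G → NegFree (GF.obat F G)

/-- A valuation frame (I, J): local interpretation I with the required conditions;
the global interpretation J is determined by I and is built into `Frame.val` below. -/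
structure Frame (A : Type) (c : A → A) where
  I : List (GS A) → GS A → ℕ
  I01 : ∀ ψ x, I ψ x = 0 ∨ I ψ x = 1
  Itop : ∀ ψ, I ψ GS.top = 1
  Ibot : ∀ ψ, I ψ GS.bot = 0
  Icompl : ∀ ψ x, I ψ (GS.compl c x) = 1 - I ψ x
  Isync : ∀ ψ ψ' x, ψ.length = ψ'.length → I ψ x = I ψ' x

/-- The valuation of a formula in unit chain expansion, relative to the sequence ψ of
𝒮-elements already traversed: a unit chain s₀ ⋗ ⋯ ⋗ s_k receives the global value
J(s₀.⋯.s_k) (the min of the local values along its prefixes), ∧ is min, ∨ is max.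
(The value on formulas not in unit chain expansion is junk and never used.) -/
def Frame.valAux {A : Type} {c : A → A} (M : Frame A c) : List (GS A) → GF A → ℕ
  | ψ, GF.base x => M.I ψ x
  | ψ, GF.conj F G => min (M.valAux ψ F) (M.valAux ψ G)
  | ψ, GF.disj F G => max (M.valAux ψ F) (M.valAux ψ G)
  | _, GF.neg _ => 0
  | ψ, GF.obat (GF.base x) G => min (M.I ψ x) (M.valAux (ψ ++ [x]) G)
  | _, GF.obat _ _ => 0

/-- `[M ⊨ F]` for F in unit chain expansion. -/
def Frame.val {A : Type} {c : A → A} (M : Frame A c) (F : GF A) : ℕ :=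
  M.valAux [] F

/-- Distribute `s ⋗ -` over the ∧/∨-structure of a formula (the ⋗-reductions 4 and 5). -/
def distOb {A : Type} (x : GS A) : GF A → GF A
  | GF.conj F G => GF.conj (distOb x F) (distOb x G)
  | GF.disj F G => GF.disj (distOb x F) (distOb x G)
  | F => GF.obat (GF.base x) F

/-- recursiveReduce on formulas in unit chain expansion: swap ∧/∨, complement the
non-chain 𝒮-elements, replace a chain with head s and tail T by
sᶜ ∨ (s ⋗ recursiveReduce T), reduced into unit chain expansion via ⋗-reductions. -/
def recursiveReduce {A : Type} (c : A → A) : GF A → GF A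
  | GF.base x => GF.base (GS.compl c x)
  | GF.conj F G => GF.disj (recursiveReduce c F) (recursiveReduce c G)
  | GF.disj F G => GF.conj (recursiveReduce c F) (recursiveReduce c G)
  | GF.obat (GF.base x) F =>
      GF.disj (GF.base (GS.compl c x)) (distOb x (recursiveReduce c F))
  | GF.obat F G => GF.obat F G
  | GF.neg F => GF.neg F

/-- Validity: every unit chain expansion that F reduces to receives value 1 in
every valuation frame. -/
def Valid {A : Type} (c : A → A) (F : GF A) : Prop :=
  ∀ (M : Frame A c) (G : GF A), UCE G → Reduces c F G → M.val G = 1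

/-- The fifteen shape pairs of the bisimulation theorem. -/
inductive ShapePair {A : Type} (c : A → A) : GF A → GF A → Prop
  | s1 (Fa Fb Fc : GF A) :
      ShapePair c (GF.obat (GF.conj Fa Fb) Fc) (GF.conj (GF.obat Fa Fc) (GF.obat Fb Fc))
  | s2 (Fa Fb Fc : GF A) :
      ShapePair c (GF.obat (GF.disj Fa Fb) Fc) (GF.disj (GF.obat Fa Fc) (GF.obat Fb Fc))
  | s3 (Fa Fb Fc : GF A) :
      ShapePair c (GF.obat Fa (GF.conj Fb Fc)) (GF.conj (GF.obat Fa Fb) (GF.obat Fa Fc))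
  | s4 (Fa Fb Fc : GF A) :
      ShapePair c (GF.obat Fa (GF.disj Fb Fc)) (GF.disj (GF.obat Fa Fb) (GF.obat Fa Fc))
  | s5 (Fa Fb Fc : GF A) :
      ShapePair c (GF.obat (GF.obat Fa Fb) Fc)
        (GF.conj (GF.obat Fa Fc) (GF.disj (GF.obat Fa Fb) (GF.obat Fa (GF.obat Fb Fc))))
  | s6 (x : GS A) :
      ShapePair c (GF.neg (GF.base x)) (GF.base (GS.compl c x))
  | s7 (F₁ F₂ : GF A) :
      ShapePair c (GF.neg (GF.conj F₁ F₂)) (GF.disj (GF.neg F₁) (GF.neg F₂))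
  | s8 (F₁ F₂ : GF A) :
      ShapePair c (GF.neg (GF.disj F₁ F₂)) (GF.conj (GF.neg F₁) (GF.neg F₂))
  | s9 (x : GS A) (F₂ : GF A) :
      ShapePair c (GF.neg (GF.obat (GF.base x) F₂))
        (GF.disj (GF.base (GS.compl c x)) (GF.obat (GF.base x) (GF.neg F₂)))
  | s10 (Fa : GF A) : ShapePair c (GF.disj Fa Fa) Fa
  | s11 (Fa : GF A) : ShapePair c (GF.conj Fa Fa) Fa
  | s12 (Fa Fb : GF A) : ShapePair c (GF.conj Fa Fb) (GF.conj Fb Fa)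
  | s13 (Fa Fb : GF A) : ShapePair c (GF.disj Fa Fb) (GF.disj Fb Fa)
  | s14 (Fa Fb Fc : GF A) :
      ShapePair c (GF.conj Fa (GF.conj Fb Fc)) (GF.conj (GF.conj Fa Fb) Fc)
  | s15 (Fa Fb Fc : GF A) :
      ShapePair c (GF.disj Fa (GF.disj Fb Fc)) (GF.disj (GF.disj Fa Fb) Fc)

/-- `ReplaceAt R F F'`: F' is obtained from F by replacing one occurrence of a
subformula related by R (in either direction). -/
inductive ReplaceAt {A : Type} (R : GF A → GF A → Prop) : GF A → GF A → Prop
  | here {F F' : GF A} : R F F' → ReplaceAt R F F'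
  | here_rev {F F' : GF A} : R F' F → ReplaceAt R F F'
  | conj_left {F F' : GF A} (G : GF A) :
      ReplaceAt R F F' → ReplaceAt R (GF.conj F G) (GF.conj F' G)
  | conj_right (F : GF A) {G G' : GF A} :
      ReplaceAt R G G' → ReplaceAt R (GF.conj F G) (GF.conj F G')
  | disj_left {F F' : GF A} (G : GF A) :
      ReplaceAt R F F' → ReplaceAt R (GF.disj F G) (GF.disj F' G)
  | disj_right (F : GF A) {G G' : GF A} :
      ReplaceAt R G G' → ReplaceAt R (GF.disj F G) (GF.disj F G')
  | neg_congr {F F' : GF A} :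
      ReplaceAt R F F' → ReplaceAt R (GF.neg F) (GF.neg F')
  | obat_left {F F' : GF A} (G : GF A) :
      ReplaceAt R F F' → ReplaceAt R (GF.obat F G) (GF.obat F' G)
  | obat_right (F : GF A) {G G' : GF A} :
      ReplaceAt R G G' → ReplaceAt R (GF.obat F G) (GF.obat F G')

section Helpers

variable {A : Type} {c : A → A}

theorem Frame.valAux_le_one (M : Frame A c) (ψ : List (GS A)) (F : GF A) :
    M.valAux ψ F ≤ 1 := by
  fun_induction Frame.valAux M ψ F with
  | case1 ψ x => have := M.I01 ψ x; omega
  | case5 ψ x G ih => exact (min_le_right _ _).trans ih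
  | _ => omega

/-- Distributing `x ⋗ -` through ∧ and ∨ does not change the value: truncation by the local
value of `x` commutes with min and max. -/
theorem Frame.valAux_distOb (M : Frame A c) (x : GS A) (ψ : List (GS A)) (F : GF A) :
    M.valAux ψ (distOb x F) = min (M.I ψ x) (M.valAux (ψ ++ [x]) F) := by
  induction F with
  | conj F G ihF ihG => simp only [distOb, Frame.valAux, ihF, ihG]; omega
  | disj F G ihF ihG => simp only [distOb, Frame.valAux, ihF, ihG]; omega
  | _ => simp only [distOb, Frame.valAux]

theorem UCE.distOb (x : GS A) {F : GF A} (hF : UCE F) : UCE (distOb x F) := by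
  induction hF with
  | base y => exact .chain (.base x y)
  | chain h => cases h with
    | base y z => exact .chain (.cons x (.base y z))
    | cons y h => exact .chain (.cons x (.cons y h))
  | conj _ _ ihF ihG => exact .conj ihF ihG
  | disj _ _ ihF ihG => exact .disj ihF ihG

theorem UCE.recursiveReduce {F : GF A} (hF : UCE F) : UCE (recursiveReduce c F) := by
  induction hF with
  | base x => exact .base _
  | chain h =>
    induction h with
    | base x y => exact .disj (.base _) (UCE.distOb x (.base _))
    | cons x _ ih => exact .disj (.base _) (UCE.distOb x ih)
  | conj _ _ ihF ihG => exact .disj ihF ihG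
  | disj _ _ ihF ihG => exact .conj ihF ihG

/-- The value of `recursiveReduce` is the Boolean complement. For a chain with head `x` and tail
value `t` this is the identity `max (1 - x) (min x (1 - t)) = 1 - min x t` on {0, 1}; the prefix
`ψ` is arbitrary because the tail is evaluated after `x`. -/
theorem Frame.valAux_recursiveReduce (M : Frame A c) {F : GF A} (hF : UCE F)
    (ψ : List (GS A)) : M.valAux ψ (GradualLogic.recursiveReduce c F) = 1 - M.valAux ψ F := by
  induction hF generalizing ψ with
  | base x => exact M.Icompl ψ x
  | chain h =>
    induction h generalizing ψ with
    | base x y =>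
      have := M.I01 ψ x
      simp only [GradualLogic.recursiveReduce, Frame.valAux, M.valAux_distOb, M.Icompl]
      omega
    | cons x _ ih =>
      have := M.I01 ψ x
      simp only [GradualLogic.recursiveReduce, Frame.valAux, M.valAux_distOb, M.Icompl, ih]
      omega
  | conj _ _ ihF ihG =>
    simp only [GradualLogic.recursiveReduce, Frame.valAux, ihF, ihG]; omega
  | disj _ _ ihF ihG =>
    simp only [GradualLogic.recursiveReduce, Frame.valAux, ihF, ihG]; omega

end Helpers

/-- Boolean algebra theorem: for every valuation frame, the
valuation of formulas in unit chain expansion, with ∧ as min, ∨ as max and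
complement given by recursiveReduce, satisfies all Boolean algebra laws. -/
theorem boolean_algebra (A : Type) [Countable A] [Infinite A]
    (c : A → A) (hc : Function.Involutive c) (M : Frame A c)
    (F F₁ F₂ F₃ : GF A) (hF : UCE F) (h₁ : UCE F₁) (h₂ : UCE F₂) (h₃ : UCE F₃) :
    -- associativity
    (min (M.val F₁) (min (M.val F₂) (M.val F₃))
      = min (min (M.val F₁) (M.val F₂)) (M.val F₃)) ∧
    (max (M.val F₁) (max (M.val F₂) (M.val F₃))
      = max (max (M.val F₁) (M.val F₂)) (M.val F₃)) ∧
    -- commutativity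
    (min (M.val F₁) (M.val F₂) = min (M.val F₂) (M.val F₁)) ∧
    (max (M.val F₁) (M.val F₂) = max (M.val F₂) (M.val F₁)) ∧
    -- distributivity
    (min (M.val F₁) (max (M.val F₂) (M.val F₃))
      = max (min (M.val F₁) (M.val F₂)) (min (M.val F₁) (M.val F₃))) ∧
    (max (M.val F₁) (min (M.val F₂) (M.val F₃))
      = min (max (M.val F₁) (M.val F₂)) (max (M.val F₁) (M.val F₃))) ∧
    -- idempotence
    (M.val (GF.conj F F) = M.val F) ∧
    (M.val (GF.disj F F) = M.val F) ∧
    -- absorption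
    (M.val (GF.conj F₁ (GF.disj F₁ F₂)) = M.val F₁) ∧
    (M.val (GF.disj F₁ (GF.conj F₁ F₂)) = M.val F₁) ∧
    -- annihilation / identity
    (M.val (GF.conj (GF.base GS.top) F) = M.val F) ∧
    (M.val (GF.disj (GF.base GS.top) F) = 1) ∧
    (M.val (GF.conj (GF.base GS.bot) F) = 0) ∧
    (M.val (GF.disj (GF.base GS.bot) F) = M.val F) ∧
    -- complementation
    (M.val (GF.disj F (recursiveReduce c F)) = 1) ∧
    (M.val (GF.conj F (recursiveReduce c F)) = 0) ∧
    -- double negation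
    (M.val (recursiveReduce c (recursiveReduce c F)) = M.val F) := by
  have hle := M.valAux_le_one [] F
  have hneg := M.valAux_recursiveReduce hF []
  have hneg2 := M.valAux_recursiveReduce (UCE.recursiveReduce (c := c) hF) []
  have htop := M.Itop []
  have hbot := M.Ibot []
  simp only [Frame.val, Frame.valAux]
  refine ⟨?_, ?_, ?_, ?_, ?_, ?_, ?_, ?_, ?_, ?_, ?_, ?_, ?_, ?_, ?_, ?_, ?_⟩ <;> omega


end GradualLogic
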